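/- Let Ω = S^{ℤᵈ} with S a finite set, and let P and Q be Borel probability measures on Ω. Suppose there is a summable function ρ : ℤᵈ → ℝ₊ such that |E_P[g] − E_Q[g]| ≤ Σ_x ρ(x) δ_x g for every local function g, where δ_x g := sup_σ |g(σˣ) − g(σ)| is the oscillation at site x. Let φ : ℤᵈ → ℝ₊ satisfy Σ_x ρ(x) φ(x) < ∞. Then there exists a coupling μ̂ of P and Q (a probability measure on Ω × Ω with marginals P and Q) such that Σ_x φ(x) μ̂{(X₁, X₂) : X₁(x) ≠ X₂(x)} ≤ Σ_x φ(x) ρ(x) < ∞. -/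

import Mathlib

open MeasureTheory Real

/-- A function on `S^{ℤᵈ}` is local if it depends on finitely many coordinates. -/
def IsLocalFn {S : Type*} {d : ℕ} (g : ((Fin d → ℤ) → S) → ℝ) : Prop :=
  ∃ Λ : Finset (Fin d → ℤ), ∀ σ τ, (∀ x ∈ Λ, σ x = τ x) → g σ = g τ

/-- Oscillation of `g` at the site `x`: `δ_x g = sup |g(σ) - g(τ)|` over configurations
agreeing off `x`. -/
noncomputable def oscSite {S : Type*} {d : ℕ} (x : Fin d → ℤ)
    (g : ((Fin d → ℤ) → S) → ℝ) : ℝ :=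
  sSup {v | ∃ σ τ : (Fin d → ℤ) → S, (∀ y, y ≠ x → σ y = τ y) ∧ v = |g σ - g τ|}

/-!
Kantorovich duality with a directed family of continuous costs `C F` in place of a single one.
Integration against `P ⊗ Q` is a positive functional on the sums `f ⊕ g`; the dual bound
`∫ f ∂P + ∫ g ∂Q ≤ K` for all `f ⊕ g ≤ C F` says that it is also nonnegative on the sums above some
`K - C F`, so the M. Riesz extension theorem extends it to a functional on all continuous functions
that is positive and has value at most `K` on every `C F`. By Riesz–Markov–Kakutani the extension
is a measure, and this is the coupling. Directedness does the work of the limit of couplings along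
an exhaustion by finite boxes.

For `C F (σ, τ) = ∑ x ∈ F, φ x 1{σ x ≠ τ x}`, a dual pair `f ⊕ g ≤ C F` is separated by the
`C F`-Lipschitz function `h σ = ⨅ τ, C F (σ, τ) - g τ`, which depends only on the sites of `F` and
oscillates by at most `φ x` at `x`. Hence `∫ f ∂P + ∫ g ∂Q ≤ ∫ h ∂P - ∫ h ∂Q ≤ ∑ x, φ x * ρ x`.
-/

section RieszExtension

variable {E I : Type*} [AddCommGroup E] [PartialOrder E] [IsOrderedAddMonoid E] [Module ℝ E]
  [PosSMulMono ℝ E]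

/-- The convex cone generated by the nonnegative vectors and a downward directed family `u`;
directedness is what makes a single `u i` suffice for each of its elements. -/
def directedUpperCone [Nonempty I] (u : I → E) (hu : Directed (· ≥ ·) u) : PointedCone ℝ E where
  carrier := {x | ∃ i, ∃ t : ℝ, 0 ≤ t ∧ t • u i ≤ x}
  zero_mem' := ⟨Classical.arbitrary I, 0, le_rfl, (zero_smul ℝ _).le⟩
  add_mem' := by
    rintro x y ⟨i, s, hs, hx⟩ ⟨j, t, ht, hy⟩
    obtain ⟨k, hik, hjk⟩ := hu i j
    refine ⟨k, s + t, add_nonneg hs ht, ?_⟩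
    rw [add_smul]
    exact add_le_add ((smul_le_smul_of_nonneg_left hik hs).trans hx)
      ((smul_le_smul_of_nonneg_left hjk ht).trans hy)
  smul_mem' := by
    rintro c x ⟨i, t, ht, hx⟩
    refine ⟨i, c * t, mul_nonneg c.2 ht, ?_⟩
    rw [mul_smul]
    exact smul_le_smul_of_nonneg_left hx c.2

theorem exists_nonneg_extension_of_directed [Nonempty I] (M : Submodule ℝ E) (ℓ : E →ₗ[ℝ] ℝ)
    (hM : ∀ y, ∃ x ∈ M, y ≤ x) (hℓ : ∀ x ∈ M, 0 ≤ x → 0 ≤ ℓ x)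
    {u : I → E} (hu : Directed (· ≥ ·) u) (hℓu : ∀ i, ∀ x ∈ M, u i ≤ x → 0 ≤ ℓ x) :
    ∃ L : E →ₗ[ℝ] ℝ, (∀ x ∈ M, L x = ℓ x) ∧ (∀ x, 0 ≤ x → 0 ≤ L x) ∧ ∀ i, 0 ≤ L (u i) := by
  have nonneg : ∀ x : M, (x : E) ∈ directedUpperCone u hu → 0 ≤ ℓ x := by
    rintro ⟨x, hxM⟩ ⟨i, t, ht, hx⟩
    obtain rfl | ht := ht.eq_or_lt
    · exact hℓ x hxM (by simpa using hx)
    · have hx' : u i ≤ t⁻¹ • x := (le_inv_smul_iff_of_pos ht).2 hx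
      have := hℓu i _ (M.smul_mem t⁻¹ hxM) hx'
      rw [map_smul, smul_eq_mul] at this
      exact nonneg_of_mul_nonneg_right this (inv_pos.2 ht)
  have mem_of_nonneg : ∀ x, 0 ≤ x → x ∈ directedUpperCone u hu := fun x hx =>
    ⟨Classical.arbitrary I, 0, le_rfl, by simpa using hx⟩
  have majorizing : ∀ y, ∃ x : M, (x : E) + y ∈ directedUpperCone u hu := fun y => by
    obtain ⟨x, hxM, hx⟩ := hM (-y)
    exact ⟨⟨x, hxM⟩, mem_of_nonneg _ (neg_le_iff_add_nonneg.1 hx)⟩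
  obtain ⟨L, hLM, hL⟩ :=
    riesz_extension (directedUpperCone u hu) ⟨M, ℓ.domRestrict M⟩ nonneg majorizing
  exact ⟨L, fun x hx => hLM ⟨x, hx⟩, fun x hx => hL x (mem_of_nonneg x hx),
    fun i => hL _ ⟨i, 1, zero_le_one, (one_smul ℝ _).le⟩⟩

end RieszExtension

section CompactSpace

variable {Z : Type*} [TopologicalSpace Z] [CompactSpace Z] [MeasurableSpace Z]

lemma integrable_of_continuous [OpensMeasurableSpace Z] (μ : Measure Z)
    [IsFiniteMeasureOnCompacts μ] {G : Type*} [NormedAddCommGroup G] {f : Z → G}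
    (hf : Continuous f) : Integrable f μ :=
  hf.integrable_of_hasCompactSupport (.of_compactSpace f)

/-- The linear functional on `C(Z, ℝ)` represented by a finite measure. -/
noncomputable def integralFunctional [OpensMeasurableSpace Z] (μ : Measure Z) [IsFiniteMeasure μ] :
    C(Z, ℝ) →ₗ[ℝ] ℝ where
  toFun f := ∫ z, f z ∂μ
  map_add' f g := integral_add (integrable_of_continuous μ f.continuous)
    (integrable_of_continuous μ g.continuous)
  map_smul' c f := integral_const_mul c f

theorem exists_isFiniteMeasure_integral_eq [T2Space Z] [BorelSpace Z] (L : C(Z, ℝ) →ₗ[ℝ] ℝ)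
    (hL : ∀ f, 0 ≤ f → 0 ≤ L f) :
    ∃ μ : Measure Z, IsFiniteMeasure μ ∧ ∀ f : C(Z, ℝ), ∫ z, f z ∂μ = L f := by
  let Λ : CompactlySupportedContinuousMap Z ℝ →ₚ[ℝ] ℝ := PositiveLinearMap.mk₀
    { toFun := fun f => L f
      map_add' := fun f g => L.map_add f g
      map_smul' := fun c f => L.map_smul c f }
    fun f hf => hL f hf
  exact ⟨RealRMK.rieszMeasure Λ, inferInstance, fun f => RealRMK.integral_rieszMeasure Λ
    (CompactlySupportedContinuousMap.continuousMapEquiv f)⟩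

end CompactSpace

theorem map_eq_of_forall_integral_comp_eq {Z X : Type*}
    [TopologicalSpace Z] [MeasurableSpace Z] [OpensMeasurableSpace Z]
    [TopologicalSpace X] [HasOuterApproxClosed X] [MeasurableSpace X] [BorelSpace X]
    {μ : Measure Z} [IsFiniteMeasure μ] {ν : Measure X} [IsFiniteMeasure ν] (p : C(Z, X))
    (h : ∀ f : C(X, ℝ), ∫ z, f (p z) ∂μ = ∫ x, f x ∂ν) : μ.map p = ν := by
  refine ext_of_forall_integral_eq_of_IsFiniteMeasure fun f => ?_
  rw [integral_map p.continuous.aemeasurable f.continuous.aestronglyMeasurable]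
  exact h f.toContinuousMap

section KantorovichDuality

variable {X Y : Type*} [TopologicalSpace X] [TopologicalSpace Y]

/-- The functions `f ⊕ g : (x, y) ↦ f x + g y`, on which the integral against a coupling is
determined by the marginals. -/
def separableSums (X Y : Type*) [TopologicalSpace X] [TopologicalSpace Y] :
    Submodule ℝ C(X × Y, ℝ) where
  carrier := {h | ∃ (f : C(X, ℝ)) (g : C(Y, ℝ)), ∀ x y, h (x, y) = f x + g y}
  zero_mem' := ⟨0, 0, by simp⟩
  add_mem' := by
    rintro h h' ⟨f, g, hfg⟩ ⟨f', g', hfg'⟩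
    exact ⟨f + f', g + g', fun x y => by simp [hfg, hfg', add_add_add_comm]⟩
  smul_mem' := by
    rintro c h ⟨f, g, hfg⟩
    exact ⟨c • f, c • g, fun x y => by simp [hfg, mul_add]⟩

variable [CompactSpace X] [CompactSpace Y] [MeasurableSpace X] [MeasurableSpace Y]

lemma integral_prod_add [OpensMeasurableSpace X] [OpensMeasurableSpace Y]
    (P : Measure X) (Q : Measure Y) [IsProbabilityMeasure P] [IsProbabilityMeasure Q]
    (f : C(X, ℝ)) (g : C(Y, ℝ)) :
    ∫ z, (f z.1 + g z.2) ∂P.prod Q = (∫ x, f x ∂P) + ∫ y, g y ∂Q := by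
  rw [integral_add ((integrable_of_continuous P f.continuous).comp_fst Q)
    ((integrable_of_continuous Q g.continuous).comp_snd P)]
  simp [integral_fun_fst, integral_fun_snd]

lemma integral_prod_nonneg_of_const_sub_le [OpensMeasurableSpace X] [OpensMeasurableSpace Y]
    (P : Measure X) (Q : Measure Y) [IsProbabilityMeasure P] [IsProbabilityMeasure Q]
    {c : C(X × Y, ℝ)} {K : ℝ}
    (hK : ∀ (f : C(X, ℝ)) (g : C(Y, ℝ)), (∀ x y, f x + g y ≤ c (x, y)) →
      (∫ x, f x ∂P) + ∫ y, g y ∂Q ≤ K)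
    {h : C(X × Y, ℝ)} (hh : h ∈ separableSums X Y) (hle : .const _ K - c ≤ h) :
    0 ≤ ∫ z, h z ∂P.prod Q := by
  obtain ⟨f, g, hfg⟩ := hh
  have hdual := hK (.const X K - f) (-g) fun x y => by
    have : K - c (x, y) ≤ h (x, y) := hle (x, y)
    simp only [ContinuousMap.sub_apply, ContinuousMap.const_apply, ContinuousMap.neg_apply]
    linarith [hfg x y]
  have hint : ∫ z, h z ∂P.prod Q = (∫ x, f x ∂P) + ∫ y, g y ∂Q := by
    rw [← integral_prod_add P Q]
    exact integral_congr_ae (.of_forall fun z => hfg z.1 z.2)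
  simp only [ContinuousMap.sub_apply, ContinuousMap.const_apply, ContinuousMap.neg_apply,
    integral_sub (integrable_const K) (integrable_of_continuous P f.continuous), integral_neg,
    integral_const, probReal_univ, one_smul] at hdual
  linarith

theorem exists_coupling_integral_le [T2Space X] [T2Space Y] [BorelSpace X] [BorelSpace Y]
    [SecondCountableTopology X] [SecondCountableTopology Y]
    (P : Measure X) (Q : Measure Y) [IsProbabilityMeasure P] [IsProbabilityMeasure Q]
    {I : Type*} [Nonempty I] {C : I → C(X × Y, ℝ)} (hC : Directed (· ≤ ·) C) {K : ℝ}
    (hK : ∀ i (f : C(X, ℝ)) (g : C(Y, ℝ)), (∀ x y, f x + g y ≤ C i (x, y)) →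
      (∫ x, f x ∂P) + ∫ y, g y ∂Q ≤ K) :
    ∃ μ : Measure (X × Y), IsProbabilityMeasure μ ∧ μ.map Prod.fst = P ∧ μ.map Prod.snd = Q ∧
      ∀ i, ∫ z, C i z ∂μ ≤ K := by
  let u : I → C(X × Y, ℝ) := fun i => .const _ K - C i
  have hu : Directed (· ≥ ·) u := hC.mono_comp _ fun _ _ h => sub_le_sub_left h _
  obtain ⟨L, hLPQ, hLpos, hLu⟩ := exists_nonneg_extension_of_directed (separableSums X Y)
    (integralFunctional (P.prod Q))
    (fun h => ⟨.const _ ‖h‖, ⟨.const X ‖h‖, 0, by simp⟩, fun z => h.apply_le_norm z⟩)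
    (fun h _ hh => integral_nonneg hh) hu
    fun i h hh => integral_prod_nonneg_of_const_sub_le P Q (hK i) hh
  obtain ⟨μ, hμ, hμL⟩ := exists_isFiniteMeasure_integral_eq L hLpos
  have hmarginals : ∀ (f : C(X, ℝ)) (g : C(Y, ℝ)),
      ∫ z, (f z.1 + g z.2) ∂μ = (∫ x, f x ∂P) + ∫ y, g y ∂Q := fun f g =>
    ((hμL (f.comp .fst + g.comp .snd)).trans (hLPQ _ ⟨f, g, fun _ _ => rfl⟩)).trans
      (integral_prod_add P Q f g)
  have hfst : μ.map Prod.fst = P := map_eq_of_forall_integral_comp_eq .fst fun f => by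
    simpa using hmarginals f 0
  have hsnd : μ.map Prod.snd = Q := map_eq_of_forall_integral_comp_eq .snd fun g => by
    simpa using hmarginals 0 g
  have hprob : IsProbabilityMeasure μ :=
    (Measure.isProbabilityMeasure_map_iff measurable_fst.aemeasurable).1 (hfst ▸ inferInstance)
  refine ⟨μ, hprob, hfst, hsnd, fun i => ?_⟩
  have := hLu i
  rw [← hμL] at this
  simpa [u, integral_sub, integrable_of_continuous μ (C i).continuous] using this

end KantorovichDuality

theorem exists_lipschitz_between {X : Type*} {c : X → X → ℝ} (hself : ∀ x, c x x = 0)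
    (htri : ∀ x y z, c x z ≤ c x y + c y z) {f g : X → ℝ} (hfg : ∀ x y, f x + g y ≤ c x y) :
    ∃ h : X → ℝ, (∀ x, f x ≤ h x) ∧ (∀ x, h x ≤ -g x) ∧ ∀ x y, h x - h y ≤ c x y := by
  have hlower : ∀ x y, f x ≤ c x y - g y := fun x y => by linarith [hfg x y]
  have hle : ∀ x y, ⨅ z, (c x z - g z) ≤ c x y - g y := fun x =>
    ciInf_le ⟨f x, Set.forall_mem_range.2 (hlower x)⟩
  refine ⟨fun x => ⨅ y, (c x y - g y), fun x => ?_, fun x => ?_, fun x y => ?_⟩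
  · have : Nonempty X := ⟨x⟩
    exact le_ciInf (hlower x)
  · simpa [hself x] using hle x x
  · have : Nonempty X := ⟨x⟩
    refine sub_le_comm.1 (le_ciInf fun z => ?_)
    linarith [hle x z, htri x y z]

section Configurations

variable {ι : Type*} {S : ι → Type*}

/-- The oscillation at the site `i` of a function on configurations, as in `oscSite`, with an
arbitrary set of sites and a spin space that may depend on the site. -/
noncomputable def oscAt (i : ι) (g : (∀ j, S j) → ℝ) : ℝ :=
  sSup {v | ∃ σ τ : ∀ j, S j, (∀ j, j ≠ i → σ j = τ j) ∧ v = |g σ - g τ|}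

lemma oscAt_nonneg (i : ι) (g : (∀ j, S j) → ℝ) : 0 ≤ oscAt i g :=
  Real.sSup_nonneg (by rintro _ ⟨σ, τ, -, rfl⟩; exact abs_nonneg _)

lemma oscAt_le {i : ι} {g : (∀ j, S j) → ℝ} {r : ℝ} (hr : 0 ≤ r)
    (h : ∀ σ τ : ∀ j, S j, (∀ j, j ≠ i → σ j = τ j) → g σ - g τ ≤ r) : oscAt i g ≤ r := by
  refine Real.sSup_le ?_ hr
  rintro _ ⟨σ, τ, hστ, rfl⟩
  exact abs_sub_le_iff.2 ⟨h σ τ hστ, h τ σ fun j hj => (hστ j hj).symm⟩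

lemma tsum_mul_oscAt_le {ρ w : ι → ℝ} {g : (∀ i, S i) → ℝ} (hρ : ∀ i, 0 ≤ ρ i)
    (hwρ : Summable fun i => w i * ρ i) (hg : ∀ i, oscAt i g ≤ w i) :
    ∑' i, ρ i * oscAt i g ≤ ∑' i, w i * ρ i := by
  have hterm : ∀ i, ρ i * oscAt i g ≤ w i * ρ i := fun i => by
    rw [mul_comm]
    exact mul_le_mul_of_nonneg_right (hg i) (hρ i)
  have hsum : Summable fun i => ρ i * oscAt i g :=
    hwρ.of_nonneg_of_le (fun i => mul_nonneg (hρ i) (oscAt_nonneg i g)) hterm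
  exact hsum.tsum_le_tsum hterm hwρ

lemma continuous_of_dependsOn [∀ i, TopologicalSpace (S i)] [∀ i, DiscreteTopology (S i)]
    {β : Type*} [TopologicalSpace β] [Nonempty β] {F : Finset ι} {g : (∀ i, S i) → β}
    (hg : DependsOn g F) : Continuous g := by
  obtain ⟨g', rfl⟩ := dependsOn_iff_exists_comp.1 hg
  exact continuous_of_discreteTopology.comp (by fun_prop)

/-- The Hamming distance of two configurations in the finite volume `F`, a disagreement at `i`
costing `w i`; the indicator makes sense without decidable equality of spins. -/
noncomputable def weightedHamming (w : ι → ℝ) (F : Finset ι) (σ τ : ∀ i, S i) : ℝ :=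
  ∑ i ∈ F, {j | σ j ≠ τ j}.indicator w i

lemma weightedHamming_eq_zero (w : ι → ℝ) {F : Finset ι} {σ τ : ∀ i, S i}
    (h : ∀ i ∈ F, σ i = τ i) : weightedHamming w F σ τ = 0 :=
  Finset.sum_eq_zero fun i hi => Set.indicator_of_notMem (not_not.2 (h i hi)) w

section NonnegWeights

variable {w : ι → ℝ} (hw : ∀ i, 0 ≤ w i)
include hw

lemma weightedHamming_mono (σ τ : ∀ i, S i) : Monotone fun F => weightedHamming w F σ τ :=
  fun _ _ hFG => Finset.sum_le_sum_of_subset_of_nonneg hFG fun i _ _ =>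
    Set.indicator_nonneg (fun j _ => hw j) i

lemma weightedHamming_triangle (F : Finset ι) (σ τ η : ∀ i, S i) :
    weightedHamming w F σ η ≤ weightedHamming w F σ τ + weightedHamming w F τ η := by
  simp only [weightedHamming, ← Finset.sum_add_distrib]
  refine Finset.sum_le_sum fun i _ => ?_
  have := hw i
  classical
  simp only [Set.indicator_apply, Set.mem_ofPred_eq]
  grind

lemma weightedHamming_le_of_agree_off (F : Finset ι) {i : ι} {σ τ : ∀ i, S i}
    (h : ∀ j, j ≠ i → σ j = τ j) : weightedHamming w F σ τ ≤ w i := by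
  classical
  calc weightedHamming w F σ τ
      ≤ weightedHamming w (insert i F) σ τ := weightedHamming_mono hw σ τ (F.subset_insert i)
    _ = {j | σ j ≠ τ j}.indicator w i :=
        Finset.sum_eq_single_of_mem i (F.mem_insert_self i) fun j _ hj =>
          Set.indicator_of_notMem (not_not.2 (h j hj)) w
    _ ≤ w i := Set.indicator_le_self' (fun _ _ => hw i) i

lemma oscAt_le_of_sub_le_weightedHamming {F : Finset ι} {g : (∀ i, S i) → ℝ}
    (hg : ∀ σ τ, g σ - g τ ≤ weightedHamming w F σ τ) (i : ι) : oscAt i g ≤ w i :=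
  oscAt_le (hw i) fun σ τ hστ => (hg σ τ).trans (weightedHamming_le_of_agree_off hw F hστ)

end NonnegWeights

lemma continuous_weightedHamming [∀ i, TopologicalSpace (S i)] [∀ i, DiscreteTopology (S i)]
    (w : ι → ℝ) (F : Finset ι) :
    Continuous fun p : (∀ i, S i) × (∀ i, S i) => weightedHamming w F p.1 p.2 := by
  refine continuous_finsetSum _ fun i _ => ?_
  exact (continuous_of_discreteTopology
    (f := fun q : S i × S i => {_j : ι | q.1 ≠ q.2}.indicator w i)).comp
      (f := fun p : (∀ i, S i) × (∀ i, S i) => (p.1 i, p.2 i)) (by fun_prop)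

lemma measurableSet_setOf_apply_ne [∀ i, MeasurableSpace (S i)] (i : ι) [MeasurableEq (S i)] :
    MeasurableSet {p : (∀ j, S j) × (∀ j, S j) | p.1 i ≠ p.2 i} :=
  (measurableSet_eq_fun (by fun_prop) (by fun_prop)).compl

lemma integral_weightedHamming [∀ i, MeasurableSpace (S i)] [∀ i, MeasurableEq (S i)]
    (μ : Measure ((∀ i, S i) × (∀ i, S i))) [IsFiniteMeasure μ] (w : ι → ℝ) (F : Finset ι) :
    ∫ p, weightedHamming w F p.1 p.2 ∂μ = ∑ i ∈ F, w i * μ.real {p | p.1 i ≠ p.2 i} := by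
  have hsite : ∀ (i : ι) (p : (∀ j, S j) × (∀ j, S j)), {j | p.1 j ≠ p.2 j}.indicator w i =
      {q : (∀ j, S j) × (∀ j, S j) | q.1 i ≠ q.2 i}.indicator (fun _ => w i) p := fun _ _ => rfl
  simp only [weightedHamming, hsite]
  rw [integral_finsetSum _ fun i _ => (integrable_const _).indicator
    (measurableSet_setOf_apply_ne i)]
  exact Finset.sum_congr rfl fun i _ => by
    rw [integral_indicator_const _ (measurableSet_setOf_apply_ne i), smul_eq_mul, mul_comm]

lemma dependsOn_of_sub_le_weightedHamming {w : ι → ℝ} {F : Finset ι} {g : (∀ i, S i) → ℝ}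
    (hg : ∀ σ τ, g σ - g τ ≤ weightedHamming w F σ τ) : DependsOn g F := fun σ τ hστ =>
  le_antisymm
    (sub_nonpos.1 ((hg σ τ).trans_eq (weightedHamming_eq_zero w hστ)))
    (sub_nonpos.1 ((hg τ σ).trans_eq (weightedHamming_eq_zero w fun i hi => (hστ i hi).symm)))

theorem integral_add_integral_le_of_le_weightedHamming [Countable ι] [∀ i, Finite (S i)]
    [∀ i, TopologicalSpace (S i)] [∀ i, DiscreteTopology (S i)]
    [∀ i, MeasurableSpace (S i)] [∀ i, BorelSpace (S i)]
    (P Q : Measure (∀ i, S i)) [IsFiniteMeasure P] [IsFiniteMeasure Q]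
    {ρ w : ι → ℝ} (hρ : ∀ i, 0 ≤ ρ i) (hw : ∀ i, 0 ≤ w i) (hwρ : Summable fun i => w i * ρ i)
    (hPQ : ∀ g : (∀ i, S i) → ℝ, (∃ F : Finset ι, DependsOn g F) → Measurable g →
      |(∫ σ, g σ ∂P) - ∫ σ, g σ ∂Q| ≤ ∑' i, ρ i * oscAt i g)
    (F : Finset ι) (f g : C(∀ i, S i, ℝ)) (hfg : ∀ σ τ, f σ + g τ ≤ weightedHamming w F σ τ) :
    (∫ σ, f σ ∂P) + ∫ σ, g σ ∂Q ≤ ∑' i, w i * ρ i := by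
  obtain ⟨h, hfh, hhg, hlip⟩ := exists_lipschitz_between
    (fun σ => weightedHamming_eq_zero w fun _ _ => rfl) (weightedHamming_triangle hw F) hfg
  have hloc : DependsOn h F := dependsOn_of_sub_le_weightedHamming hlip
  have hcont : Continuous h := continuous_of_dependsOn hloc
  have hP : ∫ σ, f σ ∂P ≤ ∫ σ, h σ ∂P := integral_mono
    (integrable_of_continuous P f.continuous) (integrable_of_continuous P hcont) hfh
  have hQ : ∫ σ, h σ ∂Q ≤ ∫ σ, -g σ ∂Q := integral_mono
    (integrable_of_continuous Q hcont) (integrable_of_continuous Q g.continuous.neg) hhg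
  rw [integral_neg] at hQ
  calc (∫ σ, f σ ∂P) + ∫ σ, g σ ∂Q
      ≤ (∫ σ, h σ ∂P) - ∫ σ, h σ ∂Q := by linarith
    _ ≤ ∑' i, ρ i * oscAt i h := (le_abs_self _).trans (hPQ h ⟨F, hloc⟩ hcont.measurable)
    _ ≤ ∑' i, w i * ρ i :=
        tsum_mul_oscAt_le hρ hwρ (oscAt_le_of_sub_le_weightedHamming hw hlip)

end Configurations

theorem coupling_from_oscillation_bound_general
    {ι : Type*} [Countable ι] {S : ι → Type*} [∀ i, Finite (S i)] [∀ i, MeasurableSpace (S i)]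
    [∀ i, MeasurableSingletonClass (S i)]
    (P Q : Measure (∀ i, S i)) [IsProbabilityMeasure P] [IsProbabilityMeasure Q]
    {ρ φ : ι → ℝ} (hρ : ∀ i, 0 ≤ ρ i) (hφ : ∀ i, 0 ≤ φ i) (hφρ : Summable fun i => φ i * ρ i)
    (hPQ : ∀ g : (∀ i, S i) → ℝ, (∃ F : Finset ι, DependsOn g F) → Measurable g →
      |(∫ σ, g σ ∂P) - ∫ σ, g σ ∂Q| ≤ ∑' i, ρ i * oscAt i g) :
    ∃ μ : Measure ((∀ i, S i) × (∀ i, S i)),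
      IsProbabilityMeasure μ ∧ μ.map Prod.fst = P ∧ μ.map Prod.snd = Q
      ∧ Summable (fun i => φ i * μ.real {p | p.1 i ≠ p.2 i})
      ∧ ∑' i, φ i * μ.real {p | p.1 i ≠ p.2 i} ≤ ∑' i, φ i * ρ i := by
  let : ∀ i, TopologicalSpace (S i) := fun _ => ⊥
  have : ∀ i, DiscreteTopology (S i) := fun _ => ⟨rfl⟩
  let C : Finset ι → C((∀ i, S i) × (∀ i, S i), ℝ) := fun F => ⟨_, continuous_weightedHamming φ F⟩
  have hC : Monotone C := fun F G hFG p => weightedHamming_mono hφ p.1 p.2 hFG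
  obtain ⟨μ, hμ, hP, hQ, hcost⟩ := exists_coupling_integral_le P Q hC.directed_le
    (integral_add_integral_le_of_le_weightedHamming P Q hρ hφ hφρ hPQ)
  have hfinite : ∀ F : Finset ι, ∑ i ∈ F, φ i * μ.real {p | p.1 i ≠ p.2 i} ≤ ∑' i, φ i * ρ i :=
    fun F => (integral_weightedHamming μ φ F).symm.trans_le (hcost F)
  have hsum := summable_of_sum_le
    (fun i => mul_nonneg (hφ i) (measureReal_nonneg (μ := μ))) hfinite
  exact ⟨μ, hμ, hP, hQ, hsum, hsum.tsum_le_of_sum_le hfinite⟩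

/-- Existence of a coupling via Kantorovich–Rubinstein duality: if
`|E_P g - E_Q g| ≤ ∑ₓ ρ(x) δ_x g` for every local function `g`, and `∑ₓ ρ(x) φ(x) < ∞`, then
there is a coupling `μ̂` of `P` and `Q` with
`∑ₓ φ(x) μ̂{X₁(x) ≠ X₂(x)} ≤ ∑ₓ φ(x) ρ(x)`. -/
theorem coupling_from_oscillation_bound
    {S : Type*} [Fintype S] [Nonempty S] [MeasurableSpace S] [MeasurableSingletonClass S]
    (d : ℕ)
    (P Q : Measure ((Fin d → ℤ) → S)) [IsProbabilityMeasure P] [IsProbabilityMeasure Q]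
    (ρ : (Fin d → ℤ) → ℝ) (hρnn : ∀ x, 0 ≤ ρ x) (hρsum : Summable ρ)
    (hdual : ∀ g : ((Fin d → ℤ) → S) → ℝ, IsLocalFn g → Measurable g →
      |(∫ σ, g σ ∂P) - ∫ σ, g σ ∂Q| ≤ ∑' x, ρ x * oscSite x g)
    (φ : (Fin d → ℤ) → ℝ) (hφnn : ∀ x, 0 ≤ φ x)
    (hφρ : Summable fun x => φ x * ρ x) :
    ∃ μhat : Measure (((Fin d → ℤ) → S) × ((Fin d → ℤ) → S)),
      IsProbabilityMeasure μhat
      ∧ μhat.map Prod.fst = P ∧ μhat.map Prod.snd = Q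
      ∧ Summable (fun x => φ x * (μhat {p | p.1 x ≠ p.2 x}).toReal)
      ∧ ∑' x, φ x * (μhat {p | p.1 x ≠ p.2 x}).toReal ≤ ∑' x, φ x * ρ x :=
  coupling_from_oscillation_bound_general P Q hρnn hφnn hφρ fun g ⟨F, hg⟩ =>
    hdual g ⟨F, fun _ _ h => hg h⟩
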